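/- arXiv:2312.11906 — 5 statements merged into one kernel-verified Lean document; each statement's English description precedes it below -/
import Mathlib

section
/- In the Morel-relation setting, for every a ∈ Aˣ one has ⟨a⟩*⟨a⁻¹⟩ = 1 in R; in particular each ⟨a⟩ is invertible in R with inverse ⟨a⁻¹⟩, and ⟨-1⟩² = 1. -/
/-- Morel-relation setting: `⟨a⟩*⟨a⁻¹⟩ = 1`; in particular each `⟨a⟩` is
invertible in `R` with inverse `⟨a⁻¹⟩`, and `⟨-1⟩² = 1`. -/
theorem angle_invertible
    {A R : Type*} [CommRing A] [Ring R]
    (η : R) (s : Aˣ → R)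
    (rel1 : ∀ a b : Aˣ, s (a * b) = s a + s b + η * s a * s b)
    (rel2 : ∀ a : Aˣ, η * s a = s a * η)
    (rel3 : η * (2 + η * s (-1)) = 0) :
    (∀ a : Aˣ, (1 + η * s a) * (1 + η * s a⁻¹) = 1) ∧
    (∀ a : Aˣ, (1 + η * s a⁻¹) * (1 + η * s a) = 1) ∧
    (1 + η * s (-1)) * (1 + η * s (-1)) = 1 := by
  have hm : ∀ a b : Aˣ, (1 + η * s a) * (1 + η * s b) = 1 + η * s (a * b) := by
    intro a b
    have h : η * s a * (η * s b) = η * (η * s a * s b) := by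
      rw [← mul_assoc, mul_assoc η (s a) η, ← rel2 a, mul_assoc η (η * s a) (s b)]
    rw [rel1, add_mul, mul_add, mul_add, one_mul, one_mul, mul_one, h, mul_add, mul_add]
    abel
  have h1 : (1 + η * s (-1)) * (1 + η * s (-1)) = 1 := by
    have h : η * (s (-1) + s (-1) + η * s (-1) * s (-1)) = η * (2 + η * s (-1)) * s (-1) := by
      noncomm_ring
    rw [hm, rel1, h, rel3, zero_mul, add_zero]
  have h2 : 1 + η * s 1 = 1 := by
    have h := hm (-1) (-1)
    rw [h1, neg_mul_neg, one_mul] at h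
    exact h.symm
  refine ⟨fun a => ?_, fun a => ?_, h1⟩
  · rw [hm, mul_inv_cancel, h2]
  · rw [hm, inv_mul_cancel, h2]
end

section
/- In the Morel-relation setting, let a ∈ Aˣ be a unit such that 1 − a is also a unit of A. If the two Steinberg relations [a]*[1−a] = 0 and [a⁻¹]*[1−a⁻¹] = 0 hold in R, then [a]*[−a] = 0 in R. (This is the algebraic key step in the proof of Lemma A.2 of the paper, showing [t][−t] = 0 in the Milnor–Witt K-theory of S[t, t⁻¹, (1−t)⁻¹].) -/
/-- Morel-relation setting: if `a` and `1 − a` are units and the two Steinberg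
relations `[a]*[1−a] = 0` and `[a⁻¹]*[1−a⁻¹] = 0` hold, then `[a]*[−a] = 0`. -/
theorem symbol_mul_symbol_neg_eq_zero
    {A R : Type*} [CommRing A] [Ring R]
    (η : R) (s : Aˣ → R)
    (rel1 : ∀ a b : Aˣ, s (a * b) = s a + s b + η * s a * s b)
    (rel2 : ∀ a : Aˣ, η * s a = s a * η)
    (rel3 : η * (2 + η * s (-1)) = 0)
    (a u v : Aˣ)
    (hu : (u : A) = 1 - (a : A))
    (hv : (v : A) = 1 - ((a⁻¹ : Aˣ) : A))
    (steinberg₁ : s a * s u = 0)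
    (steinberg₂ : s a⁻¹ * s v = 0) :
    s a * s (-a) = 0 := by
  have h11 : s 1 = s (-1) + s (-1) + η * s (-1) * s (-1) := by
    rw [← rel1]; simp
  have he1 : η * s 1 = 0 := by
    have h : η * s 1 = η * (2 + η * s (-1)) * s (-1) := by
      rw [h11]; noncomm_ring
    rw [h, rel3, zero_mul]
  have h1 : s 1 = 0 := by
    have h := rel1 1 1
    rw [mul_one, he1, zero_mul, add_zero] at h
    exact left_eq_add.mp h
  have hinv : s a + s a⁻¹ + η * s a * s a⁻¹ = 0 := by
    rw [← rel1, mul_inv_cancel, h1]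
  have hav : s a * s v = 0 := by
    have h : s a * s v
        = (s a + s a⁻¹ + η * s a * s a⁻¹) * s v - (1 + η * s a) * (s a⁻¹ * s v) := by
      noncomm_ring
    rw [h, hinv, steinberg₂]; simp
  have huv : u = (-a) * v := by
    ext
    rw [Units.val_mul, hu, hv, mul_sub, Units.val_neg, neg_mul _ ((a⁻¹ : Aˣ) : A), Units.mul_inv]
    ring
  have hcomm : η * s (-a) * s v = η * s v * s (-a) := by
    have h := rel1 (-a) v
    rw [mul_comm, rel1 v (-a), add_comm (s v)] at h
    exact (add_left_cancel h).symm
  rw [huv, rel1, hcomm, rel2 v, mul_add, mul_add, hav, ← mul_assoc, ← mul_assoc, hav] at steinberg₁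
  simpa using steinberg₁
end

section
/- In the Morel-relation setting with the additional relation [c]*[−c] = 0 for all c ∈ Aˣ, for every b ∈ Aˣ one has [b]*[−1] + ⟨−1⟩*[b]*[−1] = 0 in R. (Intermediate identity established in the proof of Corollary A.5 of the paper.) -/
/-- Morel-relation setting with `[c]*[−c] = 0` for all units `c`:
`[b]*[−1] + ⟨−1⟩*[b]*[−1] = 0`. -/
theorem symbol_neg_one_rel
    {A R : Type*} [CommRing A] [Ring R]
    (η : R) (s : Aˣ → R)
    (rel1 : ∀ a b : Aˣ, s (a * b) = s a + s b + η * s a * s b)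
    (rel2 : ∀ a : Aˣ, η * s a = s a * η)
    (rel3 : η * (2 + η * s (-1)) = 0)
    (hsn : ∀ c : Aˣ, s c * s (-c) = 0) :
    ∀ b : Aˣ, s b * s (-1) + (1 + η * s (-1)) * (s b * s (-1)) = 0 := by
  intro b
  have r3 : η * 2 + η * (η * s (-1)) = 0 := by rw [← mul_add]; exact rel3
  -- `s 1 = 0`
  have q : s 1 = s (-1) + s (-1) + η * s (-1) * s (-1) := by
    have := rel1 (-1) (-1)
    simpa using this
  have q1 : η * s 1 = 0 := by
    have : η * s 1 = (η * 2 + η * (η * s (-1))) * s (-1) := by rw [q]; noncomm_ring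
    rw [this, r3, zero_mul]
  have q2 : s 1 = 0 := by
    have := rel1 1 1
    rw [q1, mul_one, zero_mul, add_zero] at this
    exact left_eq_add.mp this
  rw [q2] at q
  -- `η [b][-1] = η [-1][b]`
  have n1 : s (-b) = s (-1) + s b + η * s (-1) * s b := by
    have := rel1 (-1) b
    rwa [neg_one_mul] at this
  have n2 : s (-b) = s b + s (-1) + η * s b * s (-1) := by
    have := rel1 b (-1)
    rwa [mul_neg_one] at this
  have c1 : η * s b * s (-1) = η * s (-1) * s b := by
    have h := n2.symm.trans n1
    rw [add_comm (s b) (s (-1))] at h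
    exact add_left_cancel h
  have c2 : s b * (η * s b * s (-1)) = η * s (-1) * s b * s b := by
    calc s b * (η * s b * s (-1)) = s b * η * s (-1) * s b := by
          rw [c1]; noncomm_ring
      _ = η * s b * s (-1) * s b := by rw [← rel2]
      _ = _ := by rw [c1]
  have e1 := hsn b
  rw [n2, mul_add, mul_add, c2] at e1
  have e2 := hsn (-b)
  rw [neg_neg, n1, add_mul, add_mul] at e2
  have comm : s b * s (-1) = s (-1) * s b := by
    have h := e1.trans e2.symm
    rw [add_comm (s b * s b)] at h
    exact add_right_cancel (add_right_cancel h)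
  rw [comm]
  calc s (-1) * s b + (1 + η * s (-1)) * (s (-1) * s b)
      = (s (-1) + s (-1) + η * s (-1) * s (-1)) * s b := by noncomm_ring
    _ = 0 := by rw [← q, zero_mul]
end

section
/- In the Morel-relation setting with the additional relation [c]*[−c] = 0 for all c ∈ Aˣ, for all a, b ∈ Aˣ one has [a]*[b] = −⟨−1⟩*[b]*[a] in R; equivalently [a]*[b] = (−1)_ε*[b]*[a], where (−1)_ε = −⟨−1⟩. (Algebraic form of Corollary A.5 of the paper, the ε-anticommutativity of symbols.) -/
/-- For `ε` in a ring `R` with `ε² = 1` and `m : ℤ`,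
`m_ε = ⌈m/2⌉·1 + ⌊m/2⌋·ε`. -/
noncomputable def mEps {R : Type*} [Ring R] (ε : R) (m : ℤ) : R :=
  (⌈(m : ℚ) / 2⌉ : ℤ) • (1 : R) + (⌊(m : ℚ) / 2⌋ : ℤ) • ε

/-- Morel-relation setting with `[c]*[−c] = 0` for all units `c`:
`[a]*[b] = −⟨−1⟩*[b]*[a]`, equivalently `[a]*[b] = (−1)_ε*[b]*[a]`. -/
theorem symbol_eps_anticomm
    {A R : Type*} [CommRing A] [Ring R]
    (η : R) (s : Aˣ → R)
    (rel1 : ∀ a b : Aˣ, s (a * b) = s a + s b + η * s a * s b)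
    (rel2 : ∀ a : Aˣ, η * s a = s a * η)
    (rel3 : η * (2 + η * s (-1)) = 0)
    (hsn : ∀ c : Aˣ, s c * s (-c) = 0) :
    ∀ a b : Aˣ,
      s a * s b = -((1 + η * s (-1)) * (s b * s a)) ∧
      s a * s b = mEps (1 + η * s (-1)) (-1) * (s b * s a) := by
  have hc : ∀ a b : Aˣ, η * s a * s b = η * s b * s a := by
    intro a b
    have h := rel1 a b
    rw [mul_comm a b, rel1 b a, add_comm (s b) (s a)] at h
    exact (add_left_cancel h).symm
  obtain ⟨g, hg⟩ : ∃ g : Aˣ → R, ∀ a, g a = 1 + η * s a := ⟨_, fun _ => rfl⟩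
  have r1 : ∀ a b, s (a * b) = s a + g a * s b := by
    intro a b
    rw [rel1, hg]; noncomm_ring
  have gs : ∀ a b, g a * s b = s b * g a := by
    intro a b
    rw [hg, add_mul, mul_add, one_mul, mul_one, hc, ← mul_assoc, ← rel2 b]
  have geta : ∀ a, g a * η = η * g a := by
    intro a
    rw [hg, add_mul, mul_add, one_mul, mul_one, mul_assoc, ← rel2 a]
  have gm : ∀ a b, g (a * b) = g a * g b := by
    intro a b
    rw [hg (a * b), r1, mul_add, ← mul_assoc, ← geta, hg b, mul_add, mul_one, ← mul_assoc, hg a]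
    noncomm_ring
  have he : η * g (-1) = -η := by
    have h : η * g (-1) + η = η * (2 + η * s (-1)) := by rw [hg]; noncomm_ring
    rw [rel3] at h
    exact eq_neg_of_add_eq_zero_left h
  have ee : g (-1) * g (-1) = 1 := by
    have h : g (-1) * g (-1) = g (-1) + η * g (-1) * s (-1) := by
      conv_lhs => rw [hg (-1), mul_add, mul_one, ← hg]
      rw [← mul_assoc, geta]
    rw [h, he, hg]; noncomm_ring
  have neg : ∀ a, s (-a) = s a + g a * s (-1) := by
    intro a
    rw [← r1, mul_neg_one]
  have neg' : ∀ a, s (-a) = s (-1) + g (-1) * s a := by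
    intro a
    rw [← r1, neg_one_mul]
  -- `⟨-1⟩[a][a] = -[a][-1]`
  have sq : ∀ a, g (-1) * (s a * s a) = -(s a * s (-1)) := by
    intro a
    have h := hsn a
    rw [neg', mul_add, ← mul_assoc, ← gs, mul_assoc] at h
    exact eq_neg_of_add_eq_zero_right h
  have gg : ∀ a, g a * g a = 1 := by
    intro a
    have h1 : η * (s a * s a) = η * (s a * s (-1)) := by
      have h := congrArg (η * ·) (sq a)
      simp only [← mul_assoc, he] at h
      simpa [mul_assoc] using h
    have h2 : η * (η * (s a * s a)) = -(2 * (η * s a)) := by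
      rw [h1, ← mul_assoc η (s a), hc, ← mul_assoc, ← mul_assoc]
      have h3 : η * η * s (-1) = -(2 * η) := by
        have h := rel3
        rw [mul_add, ← mul_assoc] at h
        rw [eq_neg_of_add_eq_zero_right h, mul_two, two_mul]
      rw [h3]; noncomm_ring
    have h4 : g a * g a = 1 + 2 * (η * s a) + η * (η * (s a * s a)) := by
      have h5 : η * s a * (η * s a) = η * (η * (s a * s a)) := by
        rw [mul_assoc, ← mul_assoc (s a), ← rel2]; simp only [mul_assoc]
      rw [← h5, hg]; noncomm_ring
    rw [h4, h2]; noncomm_ring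
  have main : ∀ a b : Aˣ, s a * s b = -(g (-1) * (s b * s a)) := by
    intro a b
    have gn : g (-a) = g a * g (-1) := by rw [← gm, mul_neg_one]
    have h := hsn (a * b)
    have e1 : s (-(a * b)) = s (-a) + g (-a) * s b := by rw [← r1, neg_mul]
    rw [e1, r1] at h
    have e2 : (s a + g a * s b) * (s (-a) + g (-a) * s b)
        = s a * s (-a) + g (-a) * (s a * s b) + g a * (s b * s (-a))
          + g a * g (-a) * (s b * s b) := by
      have t1 : s a * (g (-a) * s b) = g (-a) * (s a * s b) := by
        rw [← mul_assoc, ← gs, mul_assoc]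
      have t2 : g a * s b * (g (-a) * s b) = g a * g (-a) * (s b * s b) := by
        rw [mul_assoc, ← mul_assoc (s b), ← gs]; simp only [mul_assoc]
      rw [add_mul, mul_add, mul_add, t1, t2, mul_assoc]
      noncomm_ring
    have e3 : g a * (s b * s (-a)) = g a * (s b * s a) + s b * s (-1) := by
      rw [neg, mul_add, mul_add, ← mul_assoc (s b) (g a), ← gs, mul_assoc (g a) (s b),
        ← mul_assoc (g a) (g a), gg, one_mul]
    have e4 : g a * g (-a) = g (-1) := by rw [gn, ← mul_assoc, gg, one_mul]
    rw [e2, hsn, e3, e4, sq, gn, zero_add] at h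
    have h6 : g a * (g (-1) * (s a * s b) + s b * s a) = 0 := by
      rw [← h]; noncomm_ring
    have h7 : g (-1) * (s a * s b) + s b * s a = 0 := by
      have := congrArg (g a * ·) h6
      simpa only [← mul_assoc (g a) (g a), gg, one_mul, mul_zero] using this
    have h8 := congrArg (g (-1) * ·) h7
    simp only [mul_add, ← mul_assoc (g (-1)) (g (-1)), ee, one_mul, mul_zero] at h8
    exact eq_neg_of_add_eq_zero_left h8
  intro a b
  have hm : mEps (1 + η * s (-1)) (-1) = -(1 + η * s (-1)) := by
    have c1 : ⌈((-1 : ℤ) : ℚ) / 2⌉ = 0 := by rw [Int.ceil_eq_iff]; norm_num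
    have c2 : ⌊((-1 : ℤ) : ℚ) / 2⌋ = -1 := by rw [Int.floor_eq_iff]; norm_num
    unfold mEps
    rw [c1, c2, zero_smul, zero_add, neg_smul, one_smul]
  have h := main a b
  rw [hg] at h
  refine ⟨h, ?_⟩
  rw [hm, neg_mul]
  exact h
end

section
/- In the Morel-relation setting with the additional relation [c]*[−c] = 0 for all c ∈ Aˣ, for every a ∈ Aˣ and every integer m one has [a^m] = m_ε * [a] in R, where a^m denotes the m-th power of the unit a. (Algebraic form of Corollary A.6 of the paper, which establishes this identity in Hom_{SH(S;Λ)}(Λ, Λ(1)[1]).) -/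
/-- Morel-relation setting with `[c]*[−c] = 0` for all units `c`:
`[a^m] = m_ε * [a]` for every integer `m`, with `ε = ⟨-1⟩`. -/
theorem symbol_zpow
    {A R : Type*} [CommRing A] [Ring R]
    (η : R) (s : Aˣ → R)
    (rel1 : ∀ a b : Aˣ, s (a * b) = s a + s b + η * s a * s b)
    (rel2 : ∀ a : Aˣ, η * s a = s a * η)
    (rel3 : η * (2 + η * s (-1)) = 0)
    (hsn : ∀ c : Aˣ, s c * s (-c) = 0) :
    ∀ (a : Aˣ) (m : ℤ), s (a ^ m) = mEps (1 + η * s (-1)) m * s a := by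
  intro a m
  have comm : ∀ a b : Aˣ, η * s a * s b = η * s b * s a := by
    intro a b
    have h := rel1 a b
    rw [mul_comm a b, rel1 b a, add_comm (s b) (s a)] at h
    exact (add_left_cancel h).symm
  have hee : (1 + η * s (-1)) * (1 + η * s (-1)) = 1 := by
    have : (1 + η * s (-1)) * (1 + η * s (-1)) = 1 + (η * (2 + η * s (-1))) * s (-1) := by
      have e1 : η * s (-1) * (η * s (-1)) = η * (η * s (-1)) * s (-1) := by
        rw [rel2 (-1)]; nth_rewrite 1 [← rel2 (-1)]; rw [← rel2 (-1)]; simp only [mul_assoc]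
        rw [← mul_assoc (s (-1)) η, ← rel2 (-1)]; simp only [mul_assoc]
      rw [mul_add, mul_one, add_mul, one_mul, e1]
      noncomm_ring
    rw [this, rel3]; simp
  have hs1 : s 1 = 0 := by
    have h := rel1 (-1) 1
    rw [mul_one, add_assoc] at h
    have h' : (1 + η * s (-1)) * s 1 = 0 := by
      rw [add_mul, one_mul]
      exact (left_eq_add.mp h)
    calc s 1 = ((1 + η * s (-1)) * (1 + η * s (-1))) * s 1 := by rw [hee, one_mul]
      _ = 0 := by rw [mul_assoc, h', mul_zero]
  have hηe : η * (1 + η * s (-1)) = -η := by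
    have : η * (1 + η * s (-1)) = η * (2 + η * s (-1)) - η := by noncomm_ring
    rw [this, rel3]; simp
  -- commutation of `η` past a symbol
  have sη : ∀ (c : Aˣ) (y : R), s c * (η * y) = η * (s c * y) := by
    intro c y
    rw [← mul_assoc, ← rel2, mul_assoc]
  have cm : ∀ (b c : Aˣ) (y : R), η * (s b * (s c * y)) = η * (s c * (s b * y)) := by
    intro b c y
    have := congrArg (· * y) (comm b c)
    simpa only [mul_assoc] using this
  have hxx : η * s a * s a = η * s (-1) * s a := by
    have h := hsn a
    have e : s (-a) = s (-1) + s a + η * s (-1) * s a := by rw [← rel1]; simp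
    have h2 : s a * s (-1) = - ((1 + η * s (-1)) * (s a * s a)) := by
      rw [eq_neg_iff_add_eq_zero, ← h, e]
      simp only [mul_add, add_mul, one_mul, mul_assoc, sη]
      rw [cm (-1) a]
      abel
    calc η * s a * s a = -((η * (1 + η * s (-1))) * (s a * s a)) := by
          rw [hηe]; noncomm_ring
      _ = η * (s a * s (-1)) := by rw [h2]; noncomm_ring
      _ = η * s (-1) * s a := by rw [← mul_assoc, comm]
  obtain ⟨w, hw⟩ : ∃ w, w = (1 + η * s (-1)) * s a := ⟨_, rfl⟩
  have h1 : η * s a * s a = w - s a := by rw [hxx, hw]; noncomm_ring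
  have h2 : η * s a * w = s a - w := by
    have : η * s a * w = (η * (1 + η * s (-1))) * (s a * s a) := by
      rw [hw]
      simp only [mul_add, add_mul, one_mul, mul_one, mul_assoc, sη]
      rw [cm (-1) a]
    rw [this, hηe, neg_mul, ← mul_assoc, h1, neg_sub]
  have step : ∀ p q : ℤ, s a + (p • s a + q • w) + η * s a * (p • s a + q • w)
      = (q + 1) • s a + p • w := by
    intro p q
    rw [mul_add, mul_smul_comm, mul_smul_comm, h1, h2]
    module
  have inj : ∀ y z : R, y + η * s a * y = z + η * s a * z → y = z := by
    intro y z h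
    have hinv : (1 + η * s a⁻¹) * (1 + η * s a) = 1 := by
      have := rel1 a⁻¹ a
      rw [inv_mul_cancel, hs1] at this
      have h3 := congrArg (η * ·) this
      simp only [mul_zero, mul_add] at h3
      simp only [mul_add, add_mul, one_mul, mul_one, mul_assoc, sη] at h3 ⊢
      rw [add_assoc, ← add_assoc (η * s a⁻¹), ← h3.trans rfl] <;> simp [add_assoc, add_comm, add_left_comm]
    have h' : (1 + η * s a) * y = (1 + η * s a) * z := by
      simpa only [add_mul, one_mul] using h
    have := congrArg ((1 + η * s a⁻¹) * ·) h'
    simpa only [← mul_assoc, hinv, one_mul] using this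
  have hc : ∀ m : ℤ, ⌈((m + 1 : ℤ) : ℚ) / 2⌉ = ⌊(m : ℚ) / 2⌋ + 1 := by
    intro m
    have f : ⌊(m : ℚ) / 2⌋ = m / 2 := by exact_mod_cast Rat.floor_intCast_div_natCast m 2
    have c : ⌈((m + 1 : ℤ) : ℚ) / 2⌉ = -(-(m + 1) / 2) := by
      exact_mod_cast Rat.ceil_intCast_div_natCast (m + 1) 2
    rw [f, c]; omega
  have hf : ∀ m : ℤ, ⌊((m + 1 : ℤ) : ℚ) / 2⌋ = ⌈(m : ℚ) / 2⌉ := by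
    intro m
    have f : ⌊((m + 1 : ℤ) : ℚ) / 2⌋ = (m + 1) / 2 := by
      exact_mod_cast Rat.floor_intCast_div_natCast (m + 1) 2
    have c : ⌈(m : ℚ) / 2⌉ = -(-m / 2) := by
      exact_mod_cast Rat.ceil_intCast_div_natCast m 2
    rw [f, c]; omega
  have iffstep : ∀ m : ℤ, s (a ^ m) = ⌈(m : ℚ) / 2⌉ • s a + ⌊(m : ℚ) / 2⌋ • w ↔
      s (a ^ (m + 1)) = ⌈((m + 1 : ℤ) : ℚ) / 2⌉ • s a + ⌊((m + 1 : ℤ) : ℚ) / 2⌋ • w := by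
    intro m
    rw [hc, hf, ← step, zpow_add_one, mul_comm, rel1]
    constructor
    · intro h; rw [h]
    · intro h
      apply inj
      rw [add_assoc, add_assoc] at h
      exact add_left_cancel h
  have main : s (a ^ m) = ⌈(m : ℚ) / 2⌉ • s a + ⌊(m : ℚ) / 2⌋ • w := by
    induction m using Int.induction_on with
    | zero => simp [hs1]
    | succ i ih => exact (iffstep _).1 ih
    | pred i ih =>
      apply (iffstep _).2
      rw [sub_add_cancel]; exact ih
  rw [main, mEps, add_mul, smul_mul_assoc, smul_mul_assoc, one_mul, hw]
end
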